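/- arXiv:math/0410052 — 2 statements merged into one kernel-verified Lean document; each statement's English description precedes it below -/
import Mathlib

section
/- Let S be a Polish space, c : S × S → [0,∞) satisfy condition (★), (Ω, 𝒜, P) a probability space, ℳ a sub-σ-algebra of 𝒜, and X an S-valued random variable with ∫ c(x, x₀) dP_X(x) < ∞ for some x₀ ∈ S. Then τ_c(ℳ, X) = sup_{f ∈ Λ} [ ∫_Ω f(ω, X(ω)) dP(ω) − ∫_Ω ( ∫_S f(ω, x) dP_X(x) ) dP(ω) ], where Λ is the set of maps f : Ω × S → ℝ, measurable for ℳ ⊗ B(S), such that f(ω, ·) ∈ Lip_c for every ω ∈ Ω. -/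
open MeasureTheory ProbabilityTheory ENNReal Set

noncomputable section

/-- The `μ`-completion of the σ-algebra `m`. -/
def muCompletion {α : Type*} (m : MeasurableSpace α) (μ : @Measure α m) : MeasurableSpace α :=
  letI := m
  inferInstanceAs (MeasurableSpace (MeasureTheory.NullMeasurableSpace α μ))

/-- The universal completion of a σ-algebra: the intersection of the `μ`-completions
over all finite nonnegative measures `μ`. -/
def univCompletion {α : Type*} (m : MeasurableSpace α) : MeasurableSpace α :=
  ⨅ (μ : @Measure α m) (_ : @IsFiniteMeasure α m μ), muCompletion m μ

/-- `Lip_c`: bounded continuous functions `u : S → ℝ` with `|u x - u y| ≤ c x y`. -/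
def LipC {S : Type*} [TopologicalSpace S] (c : S → S → ℝ) : Set (S → ℝ) :=
  {u | Continuous u ∧ (∃ M, ∀ x, |u x| ≤ M) ∧ ∀ x y, |u x - u y| ≤ c x y}

/-- Condition (★): `c x y = sup_{u ∈ Lip_c} |u x - u y|` for all `x, y`. -/
def StarCond {S : Type*} [TopologicalSpace S] (c : S → S → ℝ) : Prop :=
  ∀ x y, c x y = sSup {r : ℝ | ∃ u ∈ LipC c, r = |u x - u y|}

/-- `D(μ,ν)`: couplings of `μ` and `ν`, i.e. probability measures on `S × S`
with first margin `μ` and second margin `ν`. -/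
def Couplings {S : Type*} [MeasurableSpace S] (μ ν : Measure S) : Set (Measure (S × S)) :=
  {π | IsProbabilityMeasure π ∧ π.map Prod.fst = μ ∧ π.map Prod.snd = ν}

/-- The Kantorovich–Rubinštein functional `KR_c(μ,ν)`. -/
def KR {S : Type*} [MeasurableSpace S] (c : S → S → ℝ) (μ ν : Measure S) : ℝ≥0∞ :=
  ⨅ π ∈ Couplings μ ν, ∫⁻ p, ENNReal.ofReal (c p.1 p.2) ∂π

/-- The dual functional `ℓ_c(μ,ν) = sup_{f ∈ Lip_c} |∫ f dμ - ∫ f dν|`. -/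
def lipDist {S : Type*} [TopologicalSpace S] [MeasurableSpace S] (c : S → S → ℝ)
    (μ ν : Measure S) : ℝ≥0∞ :=
  ⨆ u ∈ LipC c, ENNReal.ofReal |∫ x, u x ∂μ - ∫ x, u x ∂ν|

/-- Regular conditional distribution of `Z` given the sub-σ-algebra `M`. -/
def IsRCD {Ω S : Type*} {mΩ : MeasurableSpace Ω} [MeasurableSpace S]
    (P : @Measure Ω mΩ) (M : MeasurableSpace Ω) (Z : Ω → S) (κ : Ω → Measure S) : Prop :=
  letI := mΩ
  (∀ ω, IsProbabilityMeasure (κ ω)) ∧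
  (∀ B : Set S, MeasurableSet B → Measurable[M] (fun ω => κ ω B)) ∧
  (∀ A : Set Ω, MeasurableSet[M] A → ∀ B : Set S, MeasurableSet B →
    P (A ∩ Z ⁻¹' B) = ∫⁻ ω in A, κ ω B ∂P)

/-- The law `P_X` of a random variable. -/
def law {Ω S : Type*} {mΩ : MeasurableSpace Ω} [MeasurableSpace S]
    (P : @Measure Ω mΩ) (X : Ω → S) : Measure S :=
  letI := mΩ
  P.map X

/-- The dependence coefficient
`τ_c(ℳ, X) = E[sup_{f ∈ Lip_c} |∫ f dP_{X|ℳ} - ∫ f dP_X|]`, expressed through a given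
regular conditional distribution `κ` of `X` given `ℳ`. -/
def tauC {Ω S : Type*} {mΩ : MeasurableSpace Ω} [TopologicalSpace S] [MeasurableSpace S]
    (c : S → S → ℝ) (P : @Measure Ω mΩ) (κ : Ω → Measure S) (X : Ω → S) : ℝ≥0∞ :=
  letI := mΩ
  ∫⁻ ω, ⨆ u ∈ LipC c, ENNReal.ofReal |∫ x, u x ∂(κ ω) - ∫ x, u x ∂(law P X)| ∂P


open Filter Topology in
theorem seq_dense {S : Type*} [TopologicalSpace S] [SecondCountableTopology S] (x₀ : S)
    (L : Set (S → ℝ)) (hL : ∀ u ∈ L, Continuous u) (u₀ : S → ℝ) (hu₀ : u₀ ∈ L) :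
    ∃ d : ℕ → S → ℝ, (∀ n, d n ∈ L) ∧
      ∀ u ∈ L, ∃ φ : ℕ → ℕ, ∀ x, Tendsto (fun k => d (φ k) x) atTop (𝓝 (u x)) := by
  classical
  let ι := (TopologicalSpace.countableBasis S) × ℚ × ℚ
  let R : ι → (S → ℝ) → Prop := fun i g => ∀ x ∈ i.1.1, (i.2.1 : ℝ) < g x ∧ g x < i.2.2
  have hb := TopologicalSpace.isBasis_countableBasis S
  have : Countable (TopologicalSpace.countableBasis S) :=
    (TopologicalSpace.countable_countableBasis S).to_subtype
  have : Nonempty ι := by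
    obtain ⟨B, hB, -, -⟩ := hb.exists_subset_of_mem_open (mem_univ x₀) isOpen_univ
    exact ⟨(⟨B, hB⟩, 0, 0)⟩
  have hD : ∀ s : Finset ι, ∃ g ∈ L, (∃ u ∈ L, ∀ i ∈ s, R i u) → ∀ i ∈ s, R i g := by
    intro s
    by_cases h : ∃ u ∈ L, ∀ i ∈ s, R i u
    · obtain ⟨u, hu, h2⟩ := h
      exact ⟨u, hu, fun _ => h2⟩
    · exact ⟨u₀, hu₀, fun h' => absurd h' h⟩
  choose D hDL hDR using hD
  obtain ⟨e, he⟩ := exists_surjective_nat (Finset ι)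
  obtain ⟨j, hj⟩ := exists_surjective_nat ι
  refine ⟨fun n => D (e n), fun n => hDL _, fun u hu => ?_⟩
  choose φ hφ using fun k : ℕ => he (((Finset.range k).image j).filter (fun i => R i u))
  refine ⟨φ, fun x => ?_⟩
  have key : ∀ p q : ℚ, (p : ℝ) < u x → u x < q →
      ∀ᶠ k in atTop, (p : ℝ) < D (e (φ k)) x ∧ D (e (φ k)) x < q := by
    intro p q hp hq
    obtain ⟨B, hB, hxB, hBs⟩ := hb.exists_subset_of_mem_open
      (show x ∈ u ⁻¹' Ioo (p : ℝ) q from ⟨hp, hq⟩) (isOpen_Ioo.preimage (hL u hu))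
    obtain ⟨n, hn⟩ := hj (⟨B, hB⟩, p, q)
    filter_upwards [eventually_gt_atTop n] with k hk
    rw [hφ]
    have h1 := hDR (((Finset.range k).image j).filter (fun i => R i u))
      ⟨u, hu, fun i hi => (Finset.mem_filter.1 hi).2⟩ (⟨B, hB⟩, p, q)
      (Finset.mem_filter.2 ⟨Finset.mem_image.2 ⟨n, Finset.mem_range.2 hk, hn⟩,
        fun y hy => hBs hy⟩)
    exact h1 x hxB
  rw [tendsto_order]
  constructor
  · intro a ha
    obtain ⟨p, hp1, hp2⟩ := exists_rat_btwn ha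
    obtain ⟨q, hq⟩ := exists_rat_gt (u x)
    filter_upwards [key p q hp2 hq] with k hk using hp1.trans hk.1
  · intro a ha
    obtain ⟨q, hq1, hq2⟩ := exists_rat_btwn ha
    obtain ⟨p, hp⟩ := exists_rat_lt (u x)
    filter_upwards [key p q hp hq1] with k hk using hk.2.trans hq2

open Filter Topology

theorem lipC_integrable {S : Type*} [TopologicalSpace S] [MeasurableSpace S] [BorelSpace S]
    {c : S → S → ℝ} {u : S → ℝ} (hu : u ∈ LipC c) (ν : Measure S) [IsProbabilityMeasure ν] :
    Integrable u ν := by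
  obtain ⟨h1, ⟨K, hK⟩, -⟩ := hu
  exact Integrable.of_bound h1.measurable.aestronglyMeasurable K (Eventually.of_forall hK)

theorem exists_family {S : Type*} [TopologicalSpace S] [SecondCountableTopology S]
    [MeasurableSpace S] [BorelSpace S] (x₀ : S) (c : S → S → ℝ) (hc0 : ∀ x y, 0 ≤ c x y) :
    ∃ d : ℕ → S → ℝ, (∀ n, d n ∈ LipC c) ∧
      (∀ u ∈ LipC c, ∃ φ : ℕ → ℕ, ∀ x, Tendsto (fun k => d (φ k) x) atTop (𝓝 (u x))) ∧
      ∃ C : S → ℝ, Measurable C ∧ (∀ u ∈ LipC c, ∀ x, |u x - u x₀| ≤ C x) ∧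
        ∀ x, C x ≤ c x x₀ := by
  obtain ⟨d, hd, hφ⟩ := seq_dense x₀ (LipC c) (fun u hu => hu.1) (fun _ => 0)
    ⟨continuous_const, ⟨0, by simp⟩, by simpa using hc0⟩
  refine ⟨d, hd, hφ, fun x => ⨆ n, |d n x - d n x₀|, ?_, ?_, ?_⟩
  · refine Measurable.iSup fun n => ?_
    have := (hd n).1.measurable
    exact measurable_norm.comp (this.sub_const _)
  · intro u hu x
    obtain ⟨φ, h⟩ := hφ u hu
    refine le_of_tendsto ((h x).sub (h x₀)).abs (Eventually.of_forall fun k => ?_)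
    exact le_ciSup (f := fun n => |d n x - d n x₀|)
      ⟨c x x₀, by rintro _ ⟨n, rfl⟩; exact (hd n).2.2 x x₀⟩ (φ k)
  · intro x
    exact ciSup_le fun n => (hd n).2.2 x x₀

/-- The countable family attains the supremum. -/
theorem sup_eq_countable {S : Type*} [TopologicalSpace S]
    [MeasurableSpace S] [BorelSpace S] (x₀ : S) (c : S → S → ℝ)
    (d : ℕ → S → ℝ) (hd : ∀ n, d n ∈ LipC c)
    (hφ : ∀ u ∈ LipC c, ∃ φ : ℕ → ℕ, ∀ x, Tendsto (fun k => d (φ k) x) atTop (𝓝 (u x)))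
    (C : S → ℝ) (hC : ∀ u ∈ LipC c, ∀ x, |u x - u x₀| ≤ C x)
    (ν μ : Measure S) [IsProbabilityMeasure ν] [IsProbabilityMeasure μ]
    (hν : Integrable C ν) (hμ : Integrable C μ) :
    (⨆ u ∈ LipC c, ENNReal.ofReal |∫ x, u x ∂ν - ∫ x, u x ∂μ|) =
      ⨆ n, ENNReal.ofReal |∫ x, d n x ∂ν - ∫ x, d n x ∂μ| := by
  apply le_antisymm
  · refine iSup₂_le fun u hu => ?_
    obtain ⟨φ, h⟩ := hφ u hu
    have lim : ∀ (ρ : Measure S) [IsProbabilityMeasure ρ], Integrable C ρ →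
        Tendsto (fun k => ∫ x, (d (φ k) x - d (φ k) x₀) ∂ρ) atTop
          (𝓝 (∫ x, (u x - u x₀) ∂ρ)) := by
      intro ρ _ hρ
      refine tendsto_integral_of_dominated_convergence C (fun n => ?_) hρ (fun n => ?_) ?_
      · exact ((hd (φ n)).1.measurable.sub_const _).aestronglyMeasurable
      · exact Eventually.of_forall fun x => hC _ (hd _) x
      · exact Eventually.of_forall fun x => (h x).sub (h x₀)
    have eq : ∀ v ∈ LipC c, ∫ x, (v x - v x₀) ∂ν - ∫ x, (v x - v x₀) ∂μ
        = ∫ x, v x ∂ν - ∫ x, v x ∂μ := by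
      intro v hv
      rw [integral_sub (lipC_integrable hv ν) (integrable_const _),
        integral_sub (lipC_integrable hv μ) (integrable_const _)]
      simp
    have l2 := (lim ν hν).sub (lim μ hμ)
    rw [eq u hu] at l2
    simp_rw [fun k => eq _ (hd (φ k))] at l2
    refine le_of_tendsto ((ENNReal.continuous_ofReal.tendsto _).comp l2.abs)
      (Eventually.of_forall fun k => ?_)
    exact le_iSup (fun n => ENNReal.ofReal |∫ x, d n x ∂ν - ∫ x, d n x ∂μ|) (φ k)
  · exact iSup_le fun n => le_iSup₂ (f := fun u (_ : u ∈ LipC c) =>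
      ENNReal.ofReal |∫ x, u x ∂ν - ∫ x, u x ∂μ|) (d n) (hd n)

section core
variable {S : Type*} [TopologicalSpace S] [MeasurableSpace S] [BorelSpace S]
    {Ω Ω' : Type*} [MeasurableSpace Ω] [MeasurableSpace Ω'] {P : Measure Ω}
    [IsProbabilityMeasure P] {c : S → S → ℝ} {X : Ω → S} {T : Ω → Ω'}
    {x₀ : S} {κ : Kernel Ω' S} [IsMarkovKernel κ] {C : S → ℝ}

theorem main_formula (hX : Measurable X) (hT : Measurable T)
    (hκ : P.map (fun ω => (T ω, X ω)) = (P.map T) ⊗ₘ κ)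
    (hC : ∀ u ∈ LipC c, ∀ x, |u x - u x₀| ≤ C x) (hCi : Integrable C (P.map X))
    {f : Ω' × S → ℝ} (hf : Measurable f) (hfL : ∀ ω, (fun x => f (ω, x)) ∈ LipC c) :
    (Integrable (fun ω => f (T ω, x₀)) P →
      Integrable (fun ω => ∫ x, f (T ω, x) ∂(κ (T ω)) - ∫ x, f (T ω, x) ∂(P.map X)) P ∧
      ∫ ω, f (T ω, X ω) ∂P - ∫ ω, ∫ x, f (T ω, x) ∂(P.map X) ∂P =
      ∫ ω, (∫ x, f (T ω, x) ∂(κ (T ω)) - ∫ x, f (T ω, x) ∂(P.map X)) ∂P) ∧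
    (¬ Integrable (fun ω => f (T ω, x₀)) P →
      ∫ ω, f (T ω, X ω) ∂P - ∫ ω, ∫ x, f (T ω, x) ∂(P.map X) ∂P = 0) := by
  have : IsProbabilityMeasure (P.map X) := Measure.isProbabilityMeasure_map hX.aemeasurable
  have : IsProbabilityMeasure (P.map T) := Measure.isProbabilityMeasure_map hT.aemeasurable
  set g : Ω' × S → ℝ := fun p => f p - f (p.1, x₀) with hg
  have hF : Measurable (fun ω => f (ω, x₀)) := hf.comp (by fun_prop)
  have hgm : Measurable g := hf.sub (hF.comp measurable_fst)
  have hgC : ∀ p, ‖g p‖ ≤ C p.2 := fun p => hC _ (hfL p.1) p.2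
  have hTX : Measurable (fun ω => (T ω, X ω)) := hT.prodMk hX
  have i1 : Integrable (fun ω => g (T ω, X ω)) P :=
    Integrable.mono' ((integrable_map_measure hCi.aestronglyMeasurable hX.aemeasurable).1 hCi)
      (hgm.comp hTX).aestronglyMeasurable (Eventually.of_forall fun ω => hgC (T ω, X ω))
  have i2 : Integrable g ((P.map T) ⊗ₘ κ) := by
    rw [← hκ]
    exact (integrable_map_measure hgm.aestronglyMeasurable hTX.aemeasurable).2 i1
  have i3 : Integrable (fun ω => ∫ x, g (ω, x) ∂(κ ω)) (P.map T) :=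
    Integrable.mono' ((Measure.integrable_compProd_iff i2.aestronglyMeasurable).1 i2).2
      (hgm.stronglyMeasurable.integral_kernel_prod_right' (κ := κ)).aestronglyMeasurable
      (Eventually.of_forall fun ω => norm_integral_le_integral_norm _)
  have i4 : Integrable g ((P.map T).prod (P.map X)) :=
    Integrable.mono' (hCi.comp_snd _) hgm.aestronglyMeasurable (Eventually.of_forall hgC)
  have i5 := i4.integral_prod_left
  have i3' : Integrable (fun ω => ∫ x, g (T ω, x) ∂(κ (T ω))) P :=
    (integrable_map_measure i3.aestronglyMeasurable hT.aemeasurable).1 i3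
  have i5' : Integrable (fun ω => ∫ x, g (T ω, x) ∂(P.map X)) P :=
    (integrable_map_measure i5.aestronglyMeasurable hT.aemeasurable).1 i5
  have e1 : ∫ ω, g (T ω, X ω) ∂P = ∫ ω, ∫ x, g (T ω, x) ∂(κ (T ω)) ∂P := by
    rw [← integral_map hT.aemeasurable i3.aestronglyMeasurable,
      ← Measure.integral_compProd i2, ← hκ,
      integral_map hTX.aemeasurable hgm.aestronglyMeasurable]
  have e2 : ∀ (ν : Measure S) [IsProbabilityMeasure ν] ω,
      ∫ x, f (ω, x) ∂ν = ∫ x, g (ω, x) ∂ν + f (ω, x₀) := by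
    intro ν _ ω
    simp only [hg]
    rw [integral_sub (lipC_integrable (hfL ω) ν) (integrable_const _)]
    simp
  have e3 : ∀ ω, f (T ω, X ω) = g (T ω, X ω) + f (T ω, x₀) := by intro ω; simp [hg]
  simp_rw [fun ω => e2 (κ ω) ω, fun ω => e2 (P.map X) ω, e3]
  constructor
  · intro hi
    simp only [add_sub_add_right_eq_sub]
    refine ⟨i3'.sub i5', ?_⟩
    rw [integral_add i1 hi, integral_add i5' hi, integral_sub i3' i5', e1]
    ring
  · intro hi
    rw [integral_undef, integral_undef, sub_zero]
    · intro h; apply hi; refine (h.sub i5').congr (Eventually.of_forall fun ω => ?_); simp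
    · intro h; apply hi; refine (h.sub i1).congr (Eventually.of_forall fun ω => ?_); simp

theorem select (hX : Measurable X) (hc0 : ∀ x y, 0 ≤ c x y)
    (d : ℕ → S → ℝ) (hd : ∀ n, d n ∈ LipC c) (N : ℕ) :
    ∃ f : Ω' × S → ℝ, Measurable f ∧ (∀ ω, (fun x => f (ω, x)) ∈ LipC c) ∧
      (∃ K, ∀ p, |f p| ≤ K) ∧
      (∀ ω, 0 ≤ ∫ x, f (ω, x) ∂(κ ω) - ∫ x, f (ω, x) ∂(P.map X)) ∧
      ∀ n < N, ∀ ω, |∫ x, d n x ∂(κ ω) - ∫ x, d n x ∂(P.map X)| ≤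
        ∫ x, f (ω, x) ∂(κ ω) - ∫ x, f (ω, x) ∂(P.map X) := by
  classical
  have : IsProbabilityMeasure (P.map X) := Measure.isProbabilityMeasure_map hX.aemeasurable
  induction N with
  | zero =>
    refine ⟨fun _ => 0, measurable_const, fun ω => ⟨continuous_const, ⟨0, by simp⟩,
      by simpa using hc0⟩, ⟨0, by simp⟩, by simp, by simp⟩
  | succ N ih =>
    obtain ⟨f, hf, hfL, ⟨K, hK⟩, h0, hn⟩ := ih
    obtain ⟨hdc, ⟨K', hK'⟩, hdl⟩ := hd N
    have hneg : (fun x => - d N x) ∈ LipC c := by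
      refine ⟨hdc.neg, ⟨K', by simpa using hK'⟩, fun x y => ?_⟩
      rw [show - d N x - - d N y = -(d N x - d N y) by ring, abs_neg]
      exact hdl x y
    set G : Ω' → ℝ := fun ω => ∫ x, f (ω, x) ∂(κ ω) - ∫ x, f (ω, x) ∂(P.map X) with hG
    have hGm : Measurable G :=
      (hf.stronglyMeasurable.integral_kernel_prod_right' (κ := κ)).measurable.sub
        (hf.stronglyMeasurable.integral_prod_right').measurable
    set a : Ω' → ℝ := fun ω => ∫ x, d N x ∂(κ ω) - ∫ x, d N x ∂(P.map X) with ha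
    have ham : Measurable a :=
      ((hdc.measurable.comp measurable_snd).stronglyMeasurable.integral_kernel_prod_right'
        (κ := κ)).measurable.sub measurable_const
    set f' : Ω' × S → ℝ := fun p => if G p.1 < a p.1 then d N p.2 else
      if G p.1 < - a p.1 then - d N p.2 else f p with hf'
    have m1 : MeasurableSet {p : Ω' × S | G p.1 < a p.1} :=
      measurableSet_lt (hGm.comp measurable_fst) (ham.comp measurable_fst)
    have m2 : MeasurableSet {p : Ω' × S | G p.1 < - a p.1} :=
      measurableSet_lt (hGm.comp measurable_fst) (ham.neg.comp measurable_fst)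
    have hG' : ∀ ω, G ω ≤ ∫ x, f' (ω, x) ∂(κ ω) - ∫ x, f' (ω, x) ∂(P.map X) ∧
        |a ω| ≤ ∫ x, f' (ω, x) ∂(κ ω) - ∫ x, f' (ω, x) ∂(P.map X) := by
      intro ω
      simp only [hf']
      have hG0 : 0 ≤ G ω := h0 ω
      split_ifs with h1 h2
      · refine ⟨h1.le, ?_⟩
        rw [abs_of_pos (hG0.trans_lt h1)]
      · rw [integral_neg, integral_neg]
        have : - ∫ x, d N x ∂(κ ω) - - ∫ x, d N x ∂(P.map X) = - a ω := by simp only [ha]; ring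
        rw [this]
        refine ⟨h2.le, ?_⟩
        rw [abs_of_neg (by linarith)]
      · exact ⟨le_rfl, abs_le.2 ⟨neg_le.1 (not_lt.1 h2), not_lt.1 h1⟩⟩
    refine ⟨f', ?_, ?_, ⟨max K K', ?_⟩, ?_, ?_⟩
    · exact Measurable.ite m1 (hdc.measurable.comp measurable_snd)
        (Measurable.ite m2 (hdc.measurable.comp measurable_snd).neg hf)
    · intro ω
      simp only [hf']
      split_ifs
      · exact hd N
      · exact hneg
      · exact hfL ω
    · intro p
      simp only [hf']
      split_ifs
      · exact (hK' _).trans (le_max_right _ _)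
      · rw [abs_neg]; exact (hK' _).trans (le_max_right _ _)
      · exact (hK _).trans (le_max_left _ _)
    · exact fun ω => (h0 ω).trans (hG' ω).1
    · intro n hnN ω
      rcases Nat.lt_succ_iff_lt_or_eq.1 hnN with h | rfl
      · exact (hn n h ω).trans (hG' ω).1
      · exact (hG' ω).2

theorem core [SecondCountableTopology S] (hc0 : ∀ x y, 0 ≤ c x y)
    (hX : Measurable X) (hT : Measurable T)
    (hXint : ∫⁻ x, ENNReal.ofReal (c x x₀) ∂(P.map X) < ⊤)
    (hκ : P.map (fun ω => (T ω, X ω)) = (P.map T) ⊗ₘ κ) :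
    ∫⁻ ω, ⨆ u ∈ LipC c, ENNReal.ofReal |∫ x, u x ∂(κ (T ω)) - ∫ x, u x ∂(P.map X)| ∂P =
      ⨆ f ∈ {f : Ω' × S → ℝ | Measurable f ∧ ∀ ω, (fun x => f (ω, x)) ∈ LipC c},
        ENNReal.ofReal
          (∫ ω, f (T ω, X ω) ∂P - ∫ ω, ∫ x, f (T ω, x) ∂(P.map X) ∂P) := by
  have : IsProbabilityMeasure (P.map X) := Measure.isProbabilityMeasure_map hX.aemeasurable
  have : IsProbabilityMeasure (P.map T) := Measure.isProbabilityMeasure_map hT.aemeasurable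
  obtain ⟨d, hd, hφ, C, hCm, hC, hCc⟩ := exists_family x₀ c hc0
  have hC0 : ∀ x, 0 ≤ C x := fun x => (abs_nonneg _).trans (hC _ (hd 0) x)
  have hCi : Integrable C (P.map X) := by
    refine ⟨hCm.aestronglyMeasurable, lt_of_le_of_lt (lintegral_mono fun x => ?_) hXint⟩
    rw [Real.enorm_eq_ofReal (hC0 x)]
    exact ENNReal.ofReal_le_ofReal (hCc x)
  have hCκ : ∀ᵐ ω ∂P, Integrable C (κ (T ω)) := by
    have i2 : Integrable (fun p : Ω' × S => C p.2) ((P.map T) ⊗ₘ κ) := by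
      rw [← hκ]
      refine (integrable_map_measure (hCm.comp measurable_snd).aestronglyMeasurable
        (hT.prodMk hX).aemeasurable).2 ?_
      exact (integrable_map_measure hCi.aestronglyMeasurable hX.aemeasurable).1 hCi
    exact ae_of_ae_map hT.aemeasurable
      ((Measure.integrable_compProd_iff i2.aestronglyMeasurable).1 i2).1
  apply le_antisymm
  · have hcount : ∫⁻ ω, ⨆ u ∈ LipC c,
          ENNReal.ofReal |∫ x, u x ∂(κ (T ω)) - ∫ x, u x ∂(P.map X)| ∂P =
        ∫⁻ ω, ⨆ N : ℕ, ⨆ n ∈ Finset.range N,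
          ENNReal.ofReal |∫ x, d n x ∂(κ (T ω)) - ∫ x, d n x ∂(P.map X)| ∂P := by
      refine lintegral_congr_ae ?_
      filter_upwards [hCκ] with ω hω
      rw [sup_eq_countable x₀ c d hd hφ C hC _ _ hω hCi]
      apply le_antisymm
      · exact iSup_le fun n => le_iSup_of_le (n + 1)
          (le_iSup₂_of_le n (Finset.mem_range.2 n.lt_succ_self) le_rfl)
      · exact iSup_le fun N => iSup₂_le fun n _ => le_iSup
          (fun n => ENNReal.ofReal |∫ x, d n x ∂(κ (T ω)) - ∫ x, d n x ∂(P.map X)|) n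
    rw [hcount, lintegral_iSup]
    · refine iSup_le fun N => ?_
      obtain ⟨f, hf, hfL, ⟨K, hK⟩, h0, hn⟩ := select (P := P) (Ω' := Ω') (κ := κ) hX hc0 d hd N
      refine le_iSup₂_of_le f ⟨hf, hfL⟩ ?_
      have hFi : Integrable (fun ω => f (T ω, x₀)) P :=
        Integrable.of_bound
          (hf.comp (hT.prodMk measurable_const)).aestronglyMeasurable K
          (Eventually.of_forall fun ω => hK _)
      obtain ⟨hi, he⟩ := (main_formula hX hT hκ hC hCi hf hfL).1 hFi
      rw [he, ofReal_integral_eq_lintegral_ofReal hi (Eventually.of_forall fun ω => h0 (T ω))]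
      refine lintegral_mono fun ω => iSup₂_le fun n hnN => ?_
      exact ENNReal.ofReal_le_ofReal (hn n (Finset.mem_range.1 hnN) (T ω))
    · intro N
      refine Measurable.iSup fun n => Measurable.iSup fun _ => ?_
      have ham : Measurable fun ω => ∫ x, d n x ∂(κ ω) :=
        (((hd n).1.measurable.comp measurable_snd).stronglyMeasurable.integral_kernel_prod_right'
        (κ := κ)).measurable
      exact (measurable_norm.comp ((ham.comp hT).sub_const _)).ennreal_ofReal
    · intro N N' h ω
      exact iSup₂_le fun n hnN => le_iSup₂_of_le n
        (Finset.mem_range.2 ((Finset.mem_range.1 hnN).trans_le h)) le_rfl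
  · refine iSup₂_le fun f hf => ?_
    obtain ⟨hf, hfL⟩ := hf
    obtain ⟨m1, m2⟩ := main_formula hX hT hκ hC hCi hf hfL
    by_cases hi : Integrable (fun ω => f (T ω, x₀)) P
    · rw [(m1 hi).2]
      refine (ENNReal.ofReal_le_ofReal (le_abs_self _)).trans ?_
      rw [← Real.enorm_eq_ofReal_abs]
      refine (enorm_integral_le_lintegral_enorm _).trans (lintegral_mono fun ω => ?_)
      rw [Real.enorm_eq_ofReal_abs]
      exact le_iSup₂ (f := fun u (_ : u ∈ LipC c) =>
        ENNReal.ofReal |∫ x, u x ∂(κ (T ω)) - ∫ x, u x ∂(P.map X)|) _ (hfL (T ω))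
    · rw [m2 hi]; simp
end core

/-- **Equivalent expression of the dependence coefficient**:
`τ_c(ℳ, X) = sup_{f ∈ Λ} [∫ f(ω, X(ω)) dP(ω) - ∫ (∫ f(ω, x) dP_X(x)) dP(ω)]`, where
`Λ` is the set of `ℳ ⊗ B(S)`-measurable maps `f : Ω × S → ℝ` with `f(ω,·) ∈ Lip_c`
for every `ω`. -/
theorem tauC_eq_sup_integrands
    {S : Type*} [TopologicalSpace S] [PolishSpace S] [MeasurableSpace S] [BorelSpace S]
    {Ω : Type*} [mΩ : MeasurableSpace Ω] (P : Measure Ω) [IsProbabilityMeasure P]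
    (c : S → S → ℝ) (hc0 : ∀ x y, 0 ≤ c x y) (hstar : StarCond c)
    (X : Ω → S) (hX : Measurable X)
    (x₀ : S) (hXint : ∫⁻ x, ENNReal.ofReal (c x x₀) ∂(P.map X) < ⊤)
    (M : MeasurableSpace Ω) (hM : M ≤ mΩ)
    (κX : Ω → Measure S) (hκX : IsRCD P M X κX) :
    tauC c P κX X =
      ⨆ f ∈ {f : Ω × S → ℝ |
          (@Measurable (Ω × S) ℝ (@Prod.instMeasurableSpace Ω S M _) _ f) ∧
          ∀ ω, (fun x => f (ω, x)) ∈ LipC c},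
        ENNReal.ofReal
          (∫ ω, f (ω, X ω) ∂P - ∫ ω, ∫ x, f (ω, x) ∂(law P X) ∂P) := by
  obtain ⟨h1, h2, h3⟩ := hκX
  have hT : @Measurable Ω Ω mΩ M id := fun s hs => hM s hs
  let κ : @Kernel Ω S M _ := @Kernel.mk Ω S M _ κX (@Measure.measurable_of_measurable_coe _ _ _ M _ h2)
  have hκm : @IsMarkovKernel Ω S M _ κ := @IsMarkovKernel.mk Ω S M _ κ h1
  refine @core S _ _ _ Ω Ω mΩ M P _ c X id x₀ κ hκm _ hc0 hX hT hXint ?_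
  have hTX : @Measurable Ω (Ω × S) mΩ (@Prod.instMeasurableSpace Ω S M _) (fun ω => (id ω, X ω)) :=
    Measurable.prodMk hT hX
  have hp : @IsProbabilityMeasure Ω M (@Measure.map Ω Ω mΩ M id P) :=
    @Measure.isProbabilityMeasure_map Ω Ω mΩ M P _ id hT.aemeasurable
  have hq : IsProbabilityMeasure (@Measure.map Ω (Ω × S) mΩ (@Prod.instMeasurableSpace Ω S M _)
      (fun ω => (id ω, X ω)) P) := Measure.isProbabilityMeasure_map hTX.aemeasurable
  refine @Measure.ext_prod Ω S M _ _ _ inferInstance ?_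
  intro s t hs ht
  rw [@Measure.compProd_apply_prod Ω S M _ _ κ inferInstance inferInstance s t hs ht,
    Measure.map_apply hTX (hs.prod ht)]
  refine Eq.trans ?_ (@setLIntegral_map Ω Ω mΩ M P (fun ω => κX ω t) id s hs (h2 t ht) hT).symm
  exact h3 s hs t ht

end
end

section
/- Let S be a Polish space, (Ω, 𝒜, P) a probability space, ℳ a sub-σ-algebra of 𝒜, and X an S-valued random variable. Assume there exists a random variable U uniformly distributed on [0,1] and independent of σ(X) ∨ ℳ. Then there exists a σ(U) ∨ σ(X) ∨ ℳ-measurable random variable X* : Ω → S, independent of ℳ and with the same law as X, such that P(X ≠ X*) = (1/2) E[ ‖P_{X|ℳ} − P_X‖_v ]. -/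
open MeasureTheory ProbabilityTheory ENNReal Set

noncomputable section

/-- The total variation norm `‖μ - ν‖_v` of the difference of two finite measures. -/
def tvDist {α : Type*} [MeasurableSpace α] (μ ν : Measure α) : ℝ≥0∞ :=
  (μ - ν) Set.univ + (ν - μ) Set.univ

/-- Total mass of a difference of measures, from a common part and disjoint remainders. -/
lemma berbee_sub_univ {α : Type*} [MeasurableSpace α] (c a b : Measure α)
    [IsFiniteMeasure c] [IsFiniteMeasure a] [IsFiniteMeasure b] (T : Set α)
    (hT : MeasurableSet T) (ha : a Tᶜ = 0) (hb : b T = 0) :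
    ((c + a) - (c + b)) univ = a univ := by
  apply le_antisymm
  · have h : (c + a) - (c + b) ≤ a := by
      apply Measure.sub_le_of_le_add
      rw [add_comm c a]
      exact add_le_add le_rfl (Measure.le_add_right le_rfl)
    exact h univ
  · have haT : a univ = a T := by
      rw [← measure_add_measure_compl hT, ha, add_zero]
    have hbT : b.restrict T = 0 := Measure.restrict_eq_zero.2 hb
    have h1 : ((c + a) - (c + b)).restrict T univ = a T := by
      rw [Measure.restrict_sub_eq_restrict_sub_restrict hT, Measure.restrict_add,
        Measure.restrict_add, hbT, add_zero, add_comm, Measure.add_sub_cancel,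
        Measure.restrict_apply_univ]
    rw [haT, ← h1, Measure.restrict_apply_univ]
    exact measure_mono (subset_univ _)

/-- The fibrewise computation for the maximal coupling. -/
lemma berbee_fibre {S : Type*} [MeasurableSpace S] [MeasurableSingletonClass S]
    (k μ ρ ν : Measure S) [IsProbabilityMeasure k] [IsProbabilityMeasure μ]
    [IsFiniteMeasure ρ] [IsProbabilityMeasure ν]
    (f h : S → ℝ≥0∞) (hf : Measurable f) (hh : Measurable h)
    (hk : ρ.withDensity f = k) (hμ : ρ.withDensity h = μ)
    (hft : ∀ᵐ x ∂ρ, f x ≠ ∞)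
    (hν : ∀ B, MeasurableSet B → ρ.withDensity (fun x => h x - f x) univ * ν B =
      ρ.withDensity (fun x => h x - f x) B)
    (L : S → Measure S) [∀ x, IsProbabilityMeasure (L x)]
    (hLm : ∀ B, MeasurableSet B → Measurable (fun x => L x B))
    (hL : ∀ x, L x = (min (f x) (h x) / f x) • Measure.dirac x +
      (1 - min (f x) (h x) / f x) • ν) :
    (∀ B, MeasurableSet B → ∫⁻ x, L x B ∂k = μ B) ∧
      ∫⁻ x, L x {x}ᶜ ∂k = tvDist k μ / 2 := by
  set r : S → ℝ≥0∞ := fun x => min (f x) (h x) / f x with hr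
  have hrm : Measurable r := (hf.min hh).div hf
  have hr1 : ∀ x, r x ≤ 1 := fun x =>
    ENNReal.div_le_of_le_mul (by rw [one_mul]; exact min_le_left _ _)
  set a := ρ.withDensity (fun x => f x - h x) with ha
  set b := ρ.withDensity (fun x => h x - f x) with hb
  set c := ρ.withDensity (fun x => min (f x) (h x)) with hc
  have hca : c + a = k := by
    rw [hc, ha, ← hk, ← withDensity_add_left (hf.min hh)]
    congr 1; ext x; simp only [Pi.add_apply]
    rcases le_total (f x) (h x) with H | H
    · simp [H, tsub_eq_zero_of_le H]
    · simp [H, add_tsub_cancel_of_le H]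
  have hcb : c + b = μ := by
    rw [hc, hb, ← hμ, ← withDensity_add_left (hf.min hh)]
    congr 1; ext x; simp only [Pi.add_apply]
    rcases le_total (f x) (h x) with H | H
    · simp [H, add_tsub_cancel_of_le H]
    · simp [H, tsub_eq_zero_of_le H]
  have hck : c ≤ k := hca ▸ Measure.le_add_right le_rfl
  have hak : a ≤ k := hca ▸ Measure.le_add_left le_rfl
  have hbk : b ≤ μ := hcb ▸ Measure.le_add_left le_rfl
  have : IsFiniteMeasure c := isFiniteMeasure_of_le k hck
  have : IsFiniteMeasure a := isFiniteMeasure_of_le k hak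
  have : IsFiniteMeasure b := isFiniteMeasure_of_le μ hbk
  set T : Set S := {x | h x < f x} with hT
  have hTm : MeasurableSet T := measurableSet_lt hh hf
  have haT : a Tᶜ = 0 := by
    rw [ha, withDensity_apply _ hTm.compl, setLIntegral_eq_zero_iff hTm.compl (by fun_prop)]
    refine ae_of_all _ fun x hx => tsub_eq_zero_of_le (not_lt.1 hx)
  have hbT : b T = 0 := by
    rw [hb, withDensity_apply _ hTm, setLIntegral_eq_zero_iff hTm (by fun_prop)]
    refine ae_of_all _ fun x hx => tsub_eq_zero_of_le (le_of_lt hx)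
  have hab : a univ = b univ := by
    have h1 : c univ + a univ = 1 := by rw [← Measure.add_apply, hca, measure_univ]
    have h2 : c univ + b univ = 1 := by rw [← Measure.add_apply, hcb, measure_univ]
    exact (ENNReal.add_right_inj (measure_ne_top c univ)).1 (h1.trans h2.symm)
  have htv : tvDist k μ / 2 = a univ := by
    have h1 : (k - μ) univ = a univ := by
      rw [← hca, ← hcb]; exact berbee_sub_univ c a b T hTm haT hbT
    have h2 : (μ - k) univ = b univ := by
      rw [← hca, ← hcb]
      exact berbee_sub_univ c b a Tᶜ hTm.compl (by rwa [compl_compl]) haT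
    rw [tvDist, h1, h2, ← hab, ← two_mul, mul_comm]
    exact ENNReal.mul_div_cancel_right two_ne_zero ofNat_ne_top
  have hkr : k.withDensity r = c := by
    rw [← hk, ← withDensity_mul _ hf hrm, hc]
    apply withDensity_congr_ae
    filter_upwards [hft] with x hx
    simp only [Pi.mul_apply, hr]
    by_cases h0 : f x = 0
    · simp [h0]
    · exact ENNReal.mul_div_cancel h0 hx
  have hint : ∫⁻ x, r x ∂k = c univ := by
    rw [← hkr, withDensity_apply _ MeasurableSet.univ, setLIntegral_univ]
  have h1r : ∫⁻ x, (1 - r x) ∂k = a univ := by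
    rw [lintegral_sub hrm (by rw [hint]; exact measure_ne_top _ _) (ae_of_all _ hr1), hint,
      lintegral_one, ← hca, Measure.add_apply]
    exact ENNReal.add_sub_cancel_left (measure_ne_top _ _)
  have hA : ∀ B, MeasurableSet B → ∫⁻ x, L x B ∂k = μ B := by
    intro B hB
    have : ∀ x, L x B = B.indicator r x + (1 - r x) * ν B := by
      intro x
      rw [hL, Measure.add_apply, Measure.smul_apply, Measure.smul_apply,
        Measure.dirac_apply' _ hB]
      by_cases hx : x ∈ B <;> simp [hx, hr]
    simp_rw [this]
    rw [lintegral_add_left (hrm.indicator hB), lintegral_indicator hB,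
      lintegral_mul_const _ (by fun_prop), h1r, ← withDensity_apply _ hB, hkr, hab,
      hν B hB, ← hcb, Measure.add_apply]
  refine ⟨hA, ?_⟩
  rw [htv]
  apply le_antisymm
  · rw [← h1r]
    apply lintegral_mono
    intro x
    simp only
    rw [hL, Measure.add_apply, Measure.smul_apply, Measure.smul_apply,
        Measure.dirac_apply' _ (measurableSet_singleton x).compl]
    simp only [mem_compl_iff, mem_singleton_iff, not_true_eq_false, not_false_eq_true,
      indicator_of_notMem, smul_eq_mul, mul_zero, zero_add]
    exact mul_le_of_le_one_right zero_le prob_le_one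
  · have h1 : k T ≤ μ T + ∫⁻ x, L x {x}ᶜ ∂k := by
      rw [← hA T hTm, ← lintegral_add_left (hLm T hTm), ← lintegral_indicator_one hTm]
      apply lintegral_mono
      intro x
      by_cases hx : x ∈ T
      · simp only [indicator_of_mem hx, Pi.one_apply]
        rw [← measure_univ (μ := L x)]
        refine (measure_mono ?_).trans (measure_union_le _ _)
        intro y _
        by_cases hy : y = x
        · left; rwa [hy]
        · right; exact hy
      · simp [hx]
    have h2 : a univ = a T := by rw [← measure_add_measure_compl hTm, haT, add_zero]
    rw [← hca, ← hcb, Measure.add_apply, Measure.add_apply, hbT, add_zero, ← h2] at h1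
    rw [hca] at h1
    exact (ENNReal.add_le_add_iff_left (measure_ne_top c T)).1 h1

/-- The coupling kernel. -/
lemma berbee_kernel {E S : Type*} [MeasurableSpace E] [MeasurableSpace S]
    [StandardBorelSpace S] (κ : Kernel E S) [IsMarkovKernel κ]
    (μ : Measure S) [IsProbabilityMeasure μ] :
    ∃ L : Kernel (E × S) S, IsMarkovKernel L ∧ ∀ e,
      (∀ B, MeasurableSet B → ∫⁻ x, L (e, x) B ∂(κ e) = μ B) ∧
      ∫⁻ x, L (e, x) {x}ᶜ ∂(κ e) = tvDist (κ e) μ / 2 := by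
  classical
  let η : Kernel E S := Kernel.const E μ
  let ρ : Kernel E S := κ + η
  let f := Kernel.rnDeriv κ ρ
  let h := Kernel.rnDeriv η ρ
  have hf : Measurable (fun p : E × S => f p.1 p.2) := Kernel.measurable_rnDeriv κ ρ
  have hh : Measurable (fun p : E × S => h p.1 p.2) := Kernel.measurable_rnDeriv η ρ
  have hfe : ∀ e, Measurable (f e) := fun e => Kernel.measurable_rnDeriv_right κ ρ e
  have hhe : ∀ e, Measurable (h e) := fun e => Kernel.measurable_rnDeriv_right η ρ e
  have hρ : ∀ e, ρ e = κ e + μ := fun e => by simp [ρ, η]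
  have hκd : ∀ e, (ρ e).withDensity (f e) = κ e := by
    intro e
    have hac : κ e ≪ ρ e := by
      rw [hρ]; exact Measure.absolutelyContinuous_of_le (Measure.le_add_right le_rfl)
    have := Kernel.withDensity_rnDeriv_eq (κ := κ) (η := ρ) hac
    rwa [Kernel.withDensity_apply _ (Kernel.measurable_rnDeriv κ ρ)] at this
  have hμd : ∀ e, (ρ e).withDensity (h e) = μ := by
    intro e
    have hac : η e ≪ ρ e := by
      rw [hρ]; exact Measure.absolutelyContinuous_of_le (Measure.le_add_left (by simp [η]))
    have := Kernel.withDensity_rnDeriv_eq (κ := η) (η := ρ) hac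
    rw [Kernel.withDensity_apply _ (Kernel.measurable_rnDeriv η ρ)] at this
    simpa [η] using this
  let b : E → Measure S := fun e => (ρ e).withDensity (fun x => h e x - f e x)
  have hbm : ∀ B, MeasurableSet B → Measurable (fun e => b e B) := by
    intro B hB
    have : (fun e => b e B) = fun e => ∫⁻ x in B, (h e x - f e x) ∂(ρ e) := by
      ext e; exact withDensity_apply _ hB
    rw [this]
    exact Measurable.setLIntegral_kernel_prod_right (κ := ρ)
      (f := fun e x => h e x - f e x) (hh.sub hf) hB
  have hbfin : ∀ e, b e univ ≠ ∞ := by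
    intro e
    have hle : b e ≤ μ := by
      rw [← hμd e]
      exact withDensity_mono (ae_of_all _ fun x => tsub_le_self)
    exact ((hle univ).trans_lt (measure_lt_top μ univ)).ne
  let ν : E → Measure S := fun e => if b e univ = 0 then μ else (b e univ)⁻¹ • b e
  have hνp : ∀ e, IsProbabilityMeasure (ν e) := by
    intro e
    by_cases h0 : b e univ = 0
    · simp only [ν, h0, if_true]; infer_instance
    · simp only [ν, h0, if_false]
      exact ⟨by simp [ENNReal.inv_mul_cancel h0 (hbfin e)]⟩
  have hνm : ∀ B, MeasurableSet B → Measurable (fun e => ν e B) := by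
    intro B hB
    have : (fun e => ν e B) = fun e => if b e univ = 0 then μ B else (b e univ)⁻¹ * b e B := by
      ext e; simp only [ν]; split_ifs <;> simp
    rw [this]
    exact Measurable.ite (hbm univ MeasurableSet.univ (measurableSet_singleton 0))
      measurable_const ((hbm _ MeasurableSet.univ).inv.mul (hbm B hB))
  have hνb : ∀ e B, MeasurableSet B → b e univ * ν e B = b e B := by
    intro e B hB
    by_cases h0 : b e univ = 0
    · rw [h0, zero_mul]; exact (measure_mono_null (subset_univ B) h0).symm
    · simp only [ν, h0, if_false, Measure.smul_apply, smul_eq_mul]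
      rw [← mul_assoc, ENNReal.mul_inv_cancel h0 (hbfin e), one_mul]
  let r : E × S → ℝ≥0∞ := fun p => min (f p.1 p.2) (h p.1 p.2) / f p.1 p.2
  have hrm : Measurable r := (hf.min hh).div hf
  have hr1 : ∀ p, r p ≤ 1 := fun p =>
    ENNReal.div_le_of_le_mul (by rw [one_mul]; exact min_le_left _ _)
  let L : Kernel (E × S) S :=
    ⟨fun p => r p • Measure.dirac p.2 + (1 - r p) • ν p.1, by
      apply Measure.measurable_of_measurable_coe
      intro B hB
      simp only [Measure.add_apply, Measure.smul_apply, smul_eq_mul]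
      have h1 : Measurable (fun p : E × S => Measure.dirac p.2 B) :=
        (Measure.measurable_coe hB).comp (Measure.measurable_dirac.comp measurable_snd)
      have h2 : Measurable (fun p : E × S => ν p.1 B) := (hνm B hB).comp measurable_fst
      fun_prop⟩
  have hL : ∀ e x, L (e, x) = r (e, x) • Measure.dirac x + (1 - r (e, x)) • ν e :=
    fun e x => rfl
  have hLp : IsMarkovKernel L := ⟨fun ⟨e, x⟩ => ⟨by
    rw [hL]
    simp [add_tsub_cancel_of_le (hr1 (e, x))]⟩⟩
  refine ⟨L, hLp, fun e => ?_⟩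
  exact berbee_fibre (κ e) μ (ρ e) (ν e) (f e) (h e) (hfe e) (hhe e) (hκd e) (hμd e)
    (Kernel.rnDeriv_ne_top κ ρ) (hνb e) (fun x => L (e, x))
    (fun B hB => (L.measurable_coe hB).comp measurable_prodMk_left) (fun x => hL e x)

lemma berbee_projIcc (m : Measure ℝ) (hm : m = volume.restrict (Set.Icc (0:ℝ) 1)) :
    m.map (projIcc (0:ℝ) 1 zero_le_one) = (volume : Measure unitInterval) := by
  have h1 : (volume : Measure unitInterval).map Subtype.val = volume.restrict (Set.Icc (0:ℝ) 1) :=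
    map_comap_subtype_coe measurableSet_Icc volume
  rw [hm, ← h1, Measure.map_map continuous_projIcc.measurable measurable_subtype_coe]
  have : projIcc (0:ℝ) 1 zero_le_one ∘ Subtype.val = id := by
    ext x; simp [projIcc_val]
  rw [this, Measure.map_id]

/-- Coupling for a general conditioning variable `Y`. -/
lemma berbee_aux {E S Ω : Type*} [MeasurableSpace E] [MeasurableSpace S]
    [StandardBorelSpace S] [MeasurableSpace Ω] (P : Measure Ω) [IsProbabilityMeasure P]
    (κ : Kernel E S) [IsMarkovKernel κ] (Y : Ω → E) (hY : Measurable Y)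
    (X : Ω → S) (hX : Measurable X) (U : Ω → ℝ) (hU : Measurable U)
    (hUunif : P.map U = volume.restrict (Set.Icc (0:ℝ) 1))
    (hind : IndepFun (fun ω => (Y ω, X ω)) U P)
    (hκ : ∀ A, MeasurableSet A → ∀ B, MeasurableSet B →
      P (Y ⁻¹' A ∩ X ⁻¹' B) = ∫⁻ ω in Y ⁻¹' A, κ (Y ω) B ∂P) :
    ∃ G : (E × S) × ℝ → S, Measurable G ∧
      (∀ A, MeasurableSet A → ∀ B, MeasurableSet B →
        P ((fun ω => G ((Y ω, X ω), U ω)) ⁻¹' B ∩ Y ⁻¹' A) = P.map X B * P (Y ⁻¹' A)) ∧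
      P {ω | X ω ≠ G ((Y ω, X ω), U ω)} = (∫⁻ ω, tvDist (κ (Y ω)) (P.map X) ∂P) / 2 := by
  have hμ : IsProbabilityMeasure (P.map X) := Measure.isProbabilityMeasure_map hX.aemeasurable
  have hPY : IsProbabilityMeasure (P.map Y) := Measure.isProbabilityMeasure_map hY.aemeasurable
  obtain ⟨ω₀⟩ : Nonempty Ω := nonempty_of_isProbabilityMeasure P
  have : Nonempty S := ⟨X ω₀⟩
  obtain ⟨L, hLM, hL⟩ := berbee_kernel κ (P.map X)
  obtain ⟨g, hg, hgL⟩ := L.exists_measurable_map_eq_unitInterval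
  let pr : ℝ → unitInterval := projIcc (0:ℝ) 1 zero_le_one
  have hpr : Measurable pr := continuous_projIcc.measurable
  let G : (E × S) × ℝ → S := fun q => g q.1 (pr q.2)
  have hG : Measurable G :=
    hg.comp (measurable_fst.prodMk (hpr.comp measurable_snd))
  have hYX : Measurable (fun ω => (Y ω, X ω)) := hY.prodMk hX
  have hprU : Measurable (fun ω => pr (U ω)) := hpr.comp hU
  -- joint law of `(Y, X)`
  have hjoint : P.map (fun ω => (Y ω, X ω)) = (P.map Y) ⊗ₘ κ := by
    have : IsProbabilityMeasure (P.map (fun ω => (Y ω, X ω))) :=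
      Measure.isProbabilityMeasure_map hYX.aemeasurable
    refine Measure.ext_prod fun {A B} hA hB => ?_
    rw [Measure.map_apply hYX (hA.prod hB), Measure.compProd_apply_prod hA hB,
      setLIntegral_map hA (κ.measurable_coe hB) hY, ← hκ A hA B hB]
    rfl
  have hV : P.map (fun ω => pr (U ω)) = volume := by
    rw [← berbee_projIcc _ hUunif, Measure.map_map hpr hU]; rfl
  have hjoint2 : P.map (fun ω => ((Y ω, X ω), pr (U ω))) = ((P.map Y) ⊗ₘ κ).prod volume := by
    have h1 : IndepFun (fun ω => (Y ω, X ω)) (fun ω => pr (U ω)) P :=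
      hind.comp measurable_id hpr
    rw [(indepFun_iff_map_prod_eq_prod_map_map hYX.aemeasurable
      hprU.aemeasurable).1 h1, hjoint, hV]
  have key : ∀ D : Set ((E × S) × S), MeasurableSet D →
      P {ω | ((Y ω, X ω), G ((Y ω, X ω), U ω)) ∈ D} =
        ∫⁻ ω, ∫⁻ x, L (Y ω, x) (Prod.mk (Y ω, x) ⁻¹' D) ∂(κ (Y ω)) ∂P := by
    intro D hD
    let H : (E × S) × unitInterval → (E × S) × S := fun q => (q.1, g q.1 q.2)
    have hH : Measurable H := measurable_fst.prodMk hg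
    have hmeas : Measurable (fun p : E × S => L p (Prod.mk p ⁻¹' D)) :=
      Kernel.measurable_kernel_prodMk_left hD
    have h1 : P {ω | ((Y ω, X ω), G ((Y ω, X ω), U ω)) ∈ D} =
        P.map (fun ω => ((Y ω, X ω), pr (U ω))) (H ⁻¹' D) := by
      rw [Measure.map_apply (hYX.prodMk hprU) (hH hD)]
      rfl
    rw [h1, hjoint2, Measure.prod_apply (hH hD)]
    have h2 : ∀ p : E × S, volume (Prod.mk p ⁻¹' (H ⁻¹' D)) = L p (Prod.mk p ⁻¹' D) := by
      intro p
      rw [← hgL p, Measure.map_apply hg.of_uncurry_left (measurable_prodMk_left hD)]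
      rfl
    simp_rw [h2]
    rw [Measure.lintegral_compProd hmeas]
    exact lintegral_map (Measurable.lintegral_kernel_prod_right' hmeas) hY
  refine ⟨G, hG, ?_, ?_⟩
  · intro A hA B hB
    have h1 := key {q | q.1.1 ∈ A ∧ q.2 ∈ B}
      ((measurable_fst.comp measurable_fst hA).inter (measurable_snd hB))
    have h2 : (fun ω => G ((Y ω, X ω), U ω)) ⁻¹' B ∩ Y ⁻¹' A =
        {ω | ((Y ω, X ω), G ((Y ω, X ω), U ω)) ∈
          ({q | q.1.1 ∈ A ∧ q.2 ∈ B} : Set ((E × S) × S))} := by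
      ext ω; simp [and_comm]
    rw [h2, h1]
    have h3 : ∀ ω, ∫⁻ x, L (Y ω, x) (Prod.mk (Y ω, x) ⁻¹' {q | q.1.1 ∈ A ∧ q.2 ∈ B}) ∂(κ (Y ω))
        = (Y ⁻¹' A).indicator (fun _ => P.map X B) ω := by
      intro ω
      by_cases hω : Y ω ∈ A
      · simp [hω, (hL (Y ω)).1 B hB]
      · simp [hω]
    simp_rw [h3]
    rw [lintegral_indicator (hY hA), setLIntegral_const]
  · have hD : MeasurableSet {q : (E × S) × S | q.1.2 ≠ q.2} :=
      (measurableSet_eq_fun (measurable_snd.comp measurable_fst) measurable_snd).compl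
    have h1 := key _ hD
    simp only [mem_ofPred_eq] at h1
    rw [h1]
    have h3 : ∀ ω, ∫⁻ x, L (Y ω, x) (Prod.mk (Y ω, x) ⁻¹' {q | q.1.2 ≠ q.2}) ∂(κ (Y ω))
        = tvDist (κ (Y ω)) (P.map X) / 2 := by
      intro ω
      rw [← (hL (Y ω)).2]
      congr 1; ext x; congr 1; ext y; simp [eq_comm]
    simp_rw [h3, div_eq_mul_inv]
    exact lintegral_mul_const' _ _ (by simp)

/-- **Berbee's coupling**: if `Ω` is rich enough, there is a
`σ(U) ∨ σ(X) ∨ ℳ`-measurable random variable `X*`, independent of `ℳ` and with the same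
law as `X`, such that `P(X ≠ X*) = ½ E[‖P_{X|ℳ} - P_X‖_v]`. -/
theorem berbee_coupling
    {S : Type*} [TopologicalSpace S] [PolishSpace S] [MeasurableSpace S] [BorelSpace S]
    {Ω : Type*} [mΩ : MeasurableSpace Ω] (P : Measure Ω) [IsProbabilityMeasure P]
    (X : Ω → S) (hX : Measurable X)
    (U : Ω → ℝ) (hUmeas : Measurable U)
    (hUunif : P.map U = volume.restrict (Set.Icc (0:ℝ) 1))
    (M : MeasurableSpace Ω) (hM : M ≤ mΩ)
    (hUindep : Indep (MeasurableSpace.comap U inferInstance)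
      (MeasurableSpace.comap X inferInstance ⊔ M) P)
    (κX : Ω → Measure S) (hκX : IsRCD P M X κX) :
    ∃ Xstar : Ω → S,
      Measurable[MeasurableSpace.comap U inferInstance ⊔
        MeasurableSpace.comap X inferInstance ⊔ M] Xstar ∧
      Indep (MeasurableSpace.comap Xstar inferInstance) M P ∧
      law P Xstar = law P X ∧
      P {ω | X ω ≠ Xstar ω} = (∫⁻ ω, tvDist (κX ω) (law P X) ∂P) / 2 := by
  have hP := hκX.1
  let κ : @Kernel Ω S M _ := @Kernel.mk Ω S M _ κX
    (@Measure.measurable_of_measurable_coe S Ω _ M κX hκX.2.1)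
  have hκM : @IsMarkovKernel Ω S M _ κ := @IsMarkovKernel.mk Ω S M _ κ hP
  have hpair : @Measurable Ω (Ω × S) (MeasurableSpace.comap X inferInstance ⊔ M)
      (@Prod.instMeasurableSpace Ω S M _) (fun ω => (id ω, X ω)) := by
    refine @Measurable.prodMk _ (_) _ _ (_) (_) _ _ ?_ ?_
    · exact measurable_id.mono le_sup_right le_rfl
    · exact (comap_measurable X).mono le_sup_left le_rfl
  have hind : @IndepFun Ω (Ω × S) ℝ mΩ (@Prod.instMeasurableSpace Ω S M _) _
      (fun ω => (id ω, X ω)) U P := by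
    rw [IndepFun_iff_Indep]
    exact indep_of_indep_of_le_left hUindep.symm hpair.comap_le
  obtain ⟨G, hG, h1, h2⟩ := @berbee_aux Ω S Ω M _ _ mΩ P _ κ hκM id
    (measurable_id.mono hM le_rfl) X hX U hUmeas hUunif hind hκX.2.2
  set Xs : Ω → S := fun ω => G ((id ω, X ω), U ω) with hXs
  have hmeas : Measurable[MeasurableSpace.comap U inferInstance ⊔
        MeasurableSpace.comap X inferInstance ⊔ M] Xs := by
    refine hG.comp (@Measurable.prodMk _ (_) _ _ (_) (_) _ _ ?_ ?_)
    · refine hpair.mono ?_ le_rfl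
      rw [sup_assoc]
      exact le_sup_right
    · refine (comap_measurable U).mono ?_ le_rfl
      rw [sup_assoc]
      exact le_sup_left
  have hle : MeasurableSpace.comap U inferInstance ⊔
        MeasurableSpace.comap X inferInstance ⊔ M ≤ mΩ :=
    sup_le (sup_le hUmeas.comap_le hX.comap_le) hM
  have hXsm : Measurable[mΩ] Xs := hmeas.mono hle le_rfl
  have hlaw : ∀ B, MeasurableSet B → P (Xs ⁻¹' B) = @Measure.map Ω S mΩ _ X P B := by
    intro B hB
    have := h1 univ (@MeasurableSet.univ Ω M) B hB
    simpa using this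
  refine ⟨Xs, hmeas, ?_, ?_, h2⟩
  · rw [Indep_iff]
    rintro _ A ⟨B, hB, rfl⟩ hA
    rw [hlaw B hB]
    exact h1 A hA B hB
  · unfold law
    ext B hB
    rw [Measure.map_apply hXsm hB]
    exact hlaw B hB

end
end
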